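/- Buchberger criterion for modules over a field with valuation: Let S = {g₁,…,g_s} be a finite set of nonzero elements of K[x₁,…,xₙ]^d and let I be the submodule of K[x₁,…,xₙ]^d generated by S. Suppose that for all i, j such that S-form(gᵢ,gⱼ) is defined and nonzero, the S-form reduces to zero on division by S, i.e., S-form(gᵢ,gⱼ) = Σ_k h_k g_k for some h₁,…,h_s ∈ K[x₁,…,xₙ] with in_{w,≺}(h_k g_k) ≥ in_{w,≺}(S-form(gᵢ,gⱼ)) in the term order for every k with h_k g_k ≠ 0. Then S is a Gröbner basis of I with respect to (w, ≺), i.e., in_{w,≺}(I) is generated by {in_{w,≺}(g₁),…,in_{w,≺}(g_s)}. -/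

import Mathlib

open MvPolynomial

/-- A (real-valued, additive) valuation on a field `K`:
`v(ab) = v(a)+v(b)` for nonzero `a,b`, `v(a+b) ≥ min(v a, v b)`, and `v a = ∞ ↔ a = 0`. -/
structure ValOn (K : Type*) [Field K] where
  v : K → WithTop ℝ
  v_mul : ∀ a b : K, a ≠ 0 → b ≠ 0 → v (a * b) = v a + v b
  v_add_min : ∀ a b : K, min (v a) (v b) ≤ v (a + b)
  v_eq_top_iff : ∀ a : K, v a = ⊤ ↔ a = 0

/-- A module monomial `x^u·e_k` of `R[x₁,…,xₙ]^d`, recorded as the pair `(u, k)`. -/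
abbrev MMon (n d : ℕ) := (Fin n →₀ ℕ) × Fin d

/-- A term `c·x^u·e_k`, recorded as `(c, (u, k))`. -/
abbrev Term (R : Type*) (n d : ℕ) := R × MMon n d

/-- The strict order on module monomials induced by the monomial order `mo`:
`x^α·e_i ≺ x^β·e_j` iff `x^α ≺ x^β`, or `x^α = x^β` and `i < j`. -/
def mmLt {n d : ℕ} (mo : MonomialOrder (Fin n)) (a b : MMon n d) : Prop :=
  mo.toSyn a.1 < mo.toSyn b.1 ∨ (a.1 = b.1 ∧ a.2 < b.2)

/-- The dot product `w·u` of a weight vector with an exponent vector. -/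
def wdot {n : ℕ} (w : Fin n → ℝ) (u : Fin n →₀ ℕ) : ℝ := ∑ i, w i * (u i : ℝ)

/-- The weight `ν(c) + w·u` of a term `c·x^u·e_k`. -/
def twt {R : Type*} {n d : ℕ} (ν : R → WithTop ℝ) (w : Fin n → ℝ) (t : Term R n d) :
    WithTop ℝ :=
  ν t.1 + (wdot w t.2.1 : ℝ)

/-- The term (pre)order: `c·x^u·e_i ≤ c'·x^{u'}·e_j` iff `ν(c) + w·u < ν(c') + w·u'`, or
they are equal and `x^u·e_i ⪰ x^{u'}·e_j` (smaller terms are "more initial"). -/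
def termLE {R : Type*} {n d : ℕ} (ν : R → WithTop ℝ) (w : Fin n → ℝ)
    (mo : MonomialOrder (Fin n)) (t t' : Term R n d) : Prop :=
  twt ν w t < twt ν w t' ∨
    (twt ν w t = twt ν w t' ∧ (mmLt mo t'.2 t.2 ∨ t.2 = t'.2))

/-- The coefficient of `f ∈ R[x₁,…,xₙ]^d` at the module monomial `m = (u, k)`. -/
def coeffM {R : Type*} [CommSemiring R] {n d : ℕ} (f : Fin d → MvPolynomial (Fin n) R)
    (m : MMon n d) : R :=
  coeff m.1 (f m.2)

/-- `t` is the initial term `in_{w,≺}(f)` of `f`: it is a term of `f` which is least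
in the term order among all terms of `f`. -/
def IsInit {R : Type*} [CommSemiring R] {n d : ℕ} (ν : R → WithTop ℝ) (w : Fin n → ℝ)
    (mo : MonomialOrder (Fin n)) (f : Fin d → MvPolynomial (Fin n) R) (t : Term R n d) : Prop :=
  t.1 ≠ 0 ∧ coeffM f t.2 = t.1 ∧
    ∀ m : MMon n d, coeffM f m ≠ 0 → termLE ν w mo t (coeffM f m, m)

/-- The term `c·x^u·e_k` as an element of `R[x₁,…,xₙ]^d`. -/
noncomputable def termEl {R : Type*} [CommSemiring R] {n d : ℕ} (t : Term R n d) :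
    Fin d → MvPolynomial (Fin n) R :=
  Pi.single t.2.2 (monomial t.2.1 t.1)

/-- The initial submodule `in_{w,≺}(I)`: the submodule generated by the initial terms of
the nonzero elements of `I`. -/
noncomputable def inSub {R : Type*} [CommRing R] {n d : ℕ} (ν : R → WithTop ℝ)
    (w : Fin n → ℝ) (mo : MonomialOrder (Fin n))
    (I : Submodule (MvPolynomial (Fin n) R) (Fin d → MvPolynomial (Fin n) R)) :
    Submodule (MvPolynomial (Fin n) R) (Fin d → MvPolynomial (Fin n) R) :=
  Submodule.span _ {g | ∃ f ∈ I, f ≠ 0 ∧ ∃ t : Term R n d, IsInit ν w mo f t ∧ g = termEl t}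

/-- `f ∈ R[x₁,…,xₙ]^d` is homogeneous (of some degree `δ`). -/
def IsHomog {R : Type*} [CommSemiring R] {n d : ℕ} (f : Fin d → MvPolynomial (Fin n) R) : Prop :=
  ∃ δ : ℕ, ∀ m : MMon n d, coeffM f m ≠ 0 → (∑ i, m.1 i) = δ

/-- The S-form of `f, g` whose initial terms `tf = c·x^α·e_j`, `tg = c'·x^β·e_j` lie in the
same component: `S-form(f,g) = (x^{α⊔β−α}/c)·f − (x^{α⊔β−β}/c')·g`. -/
noncomputable def sForm {K : Type*} [Field K] {n d : ℕ}
    (f g : Fin d → MvPolynomial (Fin n) K) (tf tg : Term K n d) :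
    Fin d → MvPolynomial (Fin n) K :=
  (monomial (tf.2.1 ⊔ tg.2.1 - tf.2.1) tf.1⁻¹ : MvPolynomial (Fin n) K) • f -
    (monomial (tf.2.1 ⊔ tg.2.1 - tg.2.1) tg.1⁻¹ : MvPolynomial (Fin n) K) • g

/-
Over a valued field, division by `S` need not terminate: weights range over `ℝ`, and degrees may
grow without bound. To find the initial term of `f ∈ I` it suffices, however, to reduce modulo
elements all of whose terms lie above `in(f)`. The finitely many representations of the S-forms
have a smallest positive weight gap `ε`, so rewriting a multiple `x^u·gᵢ` by an S-form yields
multiples `c·x^v·gⱼ` that either have no smaller weight and a smaller initial monomial, or have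
weight larger by at least `ε`; this stops once the weight exceeds that of `in(f)`. Fixing one
multiple `x^u·gᵢ` for each possible initial monomial, `f` becomes a `K`-linear combination of
these plus terms above `in(f)`. Distinct initial monomials cannot cancel, so the initial monomial
of `f` is that of one of the chosen multiples.
-/

namespace ValOn

/-- The valuation `V` as a bundled Mathlib `AddValuation`. -/
noncomputable def toAddValuation {K : Type*} [Field K] (V : ValOn K) :
    AddValuation K (WithTop ℝ) :=
  have map_zero : V.v 0 = ⊤ := (V.v_eq_top_iff 0).2 rfl
  have map_one : V.v 1 = 0 := by
    have one_ne_top : V.v 1 ≠ ⊤ := mt (V.v_eq_top_iff 1).1 one_ne_zero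
    have one_add_one := V.v_mul 1 1 one_ne_zero one_ne_zero
    rw [mul_one] at one_add_one
    lift V.v 1 to ℝ using one_ne_top with x
    norm_cast at one_add_one ⊢
    linarith
  have map_mul (a b : K) : V.v (a * b) = V.v a + V.v b := by
    rcases eq_or_ne a 0 with rfl | ha
    · simp [map_zero]
    rcases eq_or_ne b 0 with rfl | hb
    · simp [map_zero]
    exact V.v_mul a b ha hb
  AddValuation.of V.v map_zero map_one V.v_add_min map_mul

end ValOn

section Monomials

variable {n d : ℕ}

/-- The module monomial `x^u · m`. -/
noncomputable def shiftMon (u : Fin n →₀ ℕ) (m : MMon n d) : MMon n d := (u + m.1, m.2)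

theorem shiftMon_injective (u : Fin n →₀ ℕ) :
    Function.Injective (shiftMon u : MMon n d → MMon n d) := by
  rintro ⟨a, i⟩ ⟨b, j⟩ h
  simpa [shiftMon] using h

theorem shiftMon_left_injective (m : MMon n d) : Function.Injective (shiftMon · m) :=
  fun _ _ h => add_right_cancel (congrArg Prod.fst h)

theorem shiftMon_zero (m : MMon n d) : shiftMon 0 m = m := by
  simp [shiftMon]

theorem shiftMon_shiftMon (u v : Fin n →₀ ℕ) (m : MMon n d) :
    shiftMon u (shiftMon v m) = shiftMon (u + v) m := by
  simp [shiftMon, add_assoc]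

/-- The least common multiple of two module monomials, meaningful when they lie in the same
component; otherwise it sits in the component of the first. -/
noncomputable def lcmMon (a b : MMon n d) : MMon n d := (a.1 ⊔ b.1, a.2)

theorem lcmMon_comm {a b : MMon n d} (h : a.2 = b.2) : lcmMon a b = lcmMon b a := by
  simp [lcmMon, sup_comm, h]

theorem shiftMon_lcmMon (a b : MMon n d) : shiftMon ((a.1 ⊔ b.1) - a.1) a = lcmMon a b := by
  simp [shiftMon, lcmMon, tsub_add_cancel_of_le]

variable (mo : MonomialOrder (Fin n))

/-- The position of a module monomial in the linear order whose strict part is `mmLt`. -/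
noncomputable def monKey (m : MMon n d) : mo.syn ×ₗ Fin d := toLex (mo.toSyn m.1, m.2)

theorem monKey_injective : Function.Injective (monKey mo : MMon n d → _) := by
  rintro ⟨a, i⟩ ⟨b, j⟩ h
  simpa [monKey] using h

theorem mmLt_iff_monKey_lt {a b : MMon n d} : mmLt mo a b ↔ monKey mo a < monKey mo b := by
  simp [mmLt, monKey, Prod.Lex.toLex_lt_toLex]

theorem monKey_shiftMon_lt_iff (u : Fin n →₀ ℕ) {a b : MMon n d} :
    monKey mo (shiftMon u a) < monKey mo (shiftMon u b) ↔ monKey mo a < monKey mo b := by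
  simp [monKey, shiftMon, Prod.Lex.toLex_lt_toLex]

end Monomials

section Coefficients

variable {R : Type*} {n d : ℕ}

theorem eq_of_coeffM_eq [CommSemiring R] {f g : Fin d → MvPolynomial (Fin n) R}
    (h : ∀ m, coeffM f m = coeffM g m) : f = g :=
  funext fun k => MvPolynomial.ext _ _ fun u => h (u, k)

theorem coeffM_zero [CommSemiring R] (m : MMon n d) :
    coeffM (0 : Fin d → MvPolynomial (Fin n) R) m = 0 := by
  simp [coeffM]

theorem coeffM_add [CommSemiring R] (f g : Fin d → MvPolynomial (Fin n) R) (m : MMon n d) :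
    coeffM (f + g) m = coeffM f m + coeffM g m := by
  simp [coeffM]

theorem coeffM_neg [CommRing R] (f : Fin d → MvPolynomial (Fin n) R) (m : MMon n d) :
    coeffM (-f) m = -coeffM f m := by
  simp [coeffM]

theorem coeffM_sub [CommRing R] (f g : Fin d → MvPolynomial (Fin n) R) (m : MMon n d) :
    coeffM (f - g) m = coeffM f m - coeffM g m := by
  simp [coeffM]

theorem coeffM_termEl [CommSemiring R] (t : Term R n d) (m : MMon n d) :
    coeffM (termEl t) m = if m = t.2 then t.1 else 0 := by
  obtain ⟨c, u, i⟩ := t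
  obtain ⟨v, j⟩ := m
  by_cases hji : j = i <;> simp [coeffM, termEl, coeff_monomial, hji, eq_comm (a := u)]

theorem coeffM_monomial_smul_shiftMon [CommSemiring R] (u : Fin n →₀ ℕ) (a : R)
    (f : Fin d → MvPolynomial (Fin n) R) (m : MMon n d) :
    coeffM ((monomial u a : MvPolynomial (Fin n) R) • f) (shiftMon u m) = a * coeffM f m := by
  simp [coeffM, shiftMon, coeff_monomial_mul]

theorem exists_eq_shiftMon_of_coeffM_monomial_smul_ne_zero [CommSemiring R] {u : Fin n →₀ ℕ}
    {a : R} {f : Fin d → MvPolynomial (Fin n) R} {m : MMon n d}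
    (h : coeffM ((monomial u a : MvPolynomial (Fin n) R) • f) m ≠ 0) :
    ∃ m', m = shiftMon u m' := by
  suffices hu : u ≤ m.1 from
    ⟨(m.1 - u, m.2), by simp [shiftMon, add_tsub_cancel_of_le hu]⟩
  by_contra hu
  exact h (by simp [coeffM, coeff_monomial_mul', hu])

theorem finite_setOf_coeffM_ne_zero [CommSemiring R] (f : Fin d → MvPolynomial (Fin n) R) :
    {m | coeffM f m ≠ 0}.Finite := by
  refine (Set.finite_iUnion fun k => (f k).support.finite_toSet.image (·, k)).subset ?_
  rintro ⟨u, k⟩ huk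
  exact Set.mem_iUnion.2 ⟨k, u, mem_support_iff.2 huk, rfl⟩

theorem smul_eq_sum_monomial_smul [CommSemiring R] {σ M : Type*} [AddCommMonoid M]
    [Module (MvPolynomial σ R) M] (h : MvPolynomial σ R) (f : M) :
    h • f = ∑ u ∈ h.support, (monomial u (coeff u h) : MvPolynomial σ R) • f := by
  rw [← Finset.sum_smul, support_sum_monomial_coeff]

/-- The product of the term `t` with the scalar term `a·x^u`. -/
noncomputable def mulTerm [Mul R] (u : Fin n →₀ ℕ) (a : R) (t : Term R n d) : Term R n d :=
  (a * t.1, shiftMon u t.2)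

theorem mulTerm_mulTerm [CommSemiring R] (u v : Fin n →₀ ℕ) (a b : R) (t : Term R n d) :
    mulTerm u a (mulTerm v b t) = mulTerm (u + v) (a * b) t := by
  simp [mulTerm, shiftMon_shiftMon, mul_assoc]

theorem monomial_smul_termEl [CommSemiring R] (u : Fin n →₀ ℕ) (a : R) (t : Term R n d) :
    (monomial u a : MvPolynomial (Fin n) R) • termEl t = termEl (mulTerm u a t) := by
  simp [termEl, mulTerm, shiftMon, ← Pi.single_smul, monomial_mul]

theorem wdot_add (w : Fin n → ℝ) (a b : Fin n →₀ ℕ) : wdot w (a + b) = wdot w a + wdot w b := by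
  simp [wdot, mul_add, Finset.sum_add_distrib]

end Coefficients

section TermOrder

variable {K : Type*} [Field K] {n d : ℕ} (V : AddValuation K (WithTop ℝ)) (w : Fin n → ℝ)
  (mo : MonomialOrder (Fin n))

theorem twt_ne_top {t : Term K n d} (ht : t.1 ≠ 0) : twt V w t ≠ ⊤ :=
  WithTop.add_ne_top.2 ⟨V.ne_top_iff.2 ht, WithTop.coe_ne_top⟩

theorem twt_mulTerm (u : Fin n →₀ ℕ) (a : K) (t : Term K n d) :
    twt V w (mulTerm u a t) = (V a + wdot w u) + twt V w t := by
  simp only [twt, mulTerm, shiftMon, AddValuation.map_mul, wdot_add, WithTop.coe_add]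
  abel

/-- The position of a term in the term order, as an element of a linear order: weights compare
first, and among equal weights the larger monomial comes first. -/
noncomputable def termKey (t : Term K n d) : WithTop ℝ ×ₗ (mo.syn ×ₗ Fin d)ᵒᵈ :=
  toLex (twt V w t, OrderDual.toDual (monKey mo t.2))

variable {V w mo}

theorem termKey_le_iff {t t' : Term K n d} : termKey V w mo t ≤ termKey V w mo t' ↔
    twt V w t < twt V w t' ∨ twt V w t = twt V w t' ∧ monKey mo t'.2 ≤ monKey mo t.2 := by
  simp [termKey, Prod.Lex.toLex_le_toLex]

theorem termKey_lt_iff {t t' : Term K n d} : termKey V w mo t < termKey V w mo t' ↔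
    twt V w t < twt V w t' ∨ twt V w t = twt V w t' ∧ monKey mo t'.2 < monKey mo t.2 := by
  simp [termKey, Prod.Lex.toLex_lt_toLex]

theorem termLE_iff_termKey_le {t t' : Term K n d} :
    termLE V w mo t t' ↔ termKey V w mo t ≤ termKey V w mo t' := by
  rw [termLE, termKey_le_iff, mmLt_iff_monKey_lt, le_iff_lt_or_eq,
    (monKey_injective mo).eq_iff, eq_comm (a := t.2)]

theorem eq_of_termKey_eq {t t' : Term K n d} (h : termKey V w mo t = termKey V w mo t') :
    t.2 = t'.2 := by
  simp only [termKey, EmbeddingLike.apply_eq_iff_eq, Prod.mk.injEq] at h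
  exact monKey_injective mo h.2

theorem termKey_lt_of_le_of_ne {t t' : Term K n d} (h : termKey V w mo t ≤ termKey V w mo t')
    (hne : t.2 ≠ t'.2) : termKey V w mo t < termKey V w mo t' :=
  h.lt_of_ne fun heq => hne (eq_of_termKey_eq heq)

theorem termKey_le_of_valuation_le {a b : K} (h : V a ≤ V b) (m : MMon n d) :
    termKey V w mo (a, m) ≤ termKey V w mo (b, m) := by
  rw [termKey_le_iff]
  exact (add_le_add_left h _).lt_or_eq.imp_right (⟨·, le_rfl⟩)

theorem termKey_le_termKey_add {a b : K} (h : a + b ≠ 0) (m : MMon n d) :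
    (a ≠ 0 ∧ termKey V w mo (a, m) ≤ termKey V w mo (a + b, m)) ∨
      (b ≠ 0 ∧ termKey V w mo (b, m) ≤ termKey V w mo (a + b, m)) := by
  have ne_zero_of_le {x : K} (hx : V x ≤ V (a + b)) : x ≠ 0 :=
    V.ne_top_iff.1 (hx.trans_lt (V.ne_top_iff.2 h).lt_top).ne
  exact (V.map_add' a b).imp (fun hle => ⟨ne_zero_of_le hle, termKey_le_of_valuation_le hle m⟩)
    fun hle => ⟨ne_zero_of_le hle, termKey_le_of_valuation_le hle m⟩

theorem valuation_lt_of_termKey_lt {a b : K} {m : MMon n d}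
    (h : termKey V w mo (a, m) < termKey V w mo (b, m)) : V a < V b :=
  not_le.1 fun hba => h.not_ge (termKey_le_of_valuation_le hba m)

theorem termKey_mulTerm_le {u : Fin n →₀ ℕ} {a : K} (ha : a ≠ 0) {t t' : Term K n d}
    (h : termKey V w mo t ≤ termKey V w mo t') :
    termKey V w mo (mulTerm u a t) ≤ termKey V w mo (mulTerm u a t') := by
  have factor_ne_top : V a + wdot w u ≠ ⊤ :=
    WithTop.add_ne_top.2 ⟨V.ne_top_iff.2 ha, WithTop.coe_ne_top⟩
  rw [termKey_le_iff] at h ⊢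
  rw [twt_mulTerm, twt_mulTerm]
  refine h.imp (WithTop.add_lt_add_left factor_ne_top) fun ⟨heq, hle⟩ => ⟨by rw [heq], ?_⟩
  exact not_lt.1 fun hlt => hle.not_gt ((monKey_shiftMon_lt_iff mo u).1 hlt)

end TermOrder

section InitialTerms

variable {K : Type*} [Field K] {n d : ℕ} {V : AddValuation K (WithTop ℝ)} {w : Fin n → ℝ}
  {mo : MonomialOrder (Fin n)}

theorem isInit_iff_termKey_le {f : Fin d → MvPolynomial (Fin n) K} {t : Term K n d} :
    IsInit V w mo f t ↔ t.1 ≠ 0 ∧ coeffM f t.2 = t.1 ∧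
      ∀ m, coeffM f m ≠ 0 → termKey V w mo t ≤ termKey V w mo (coeffM f m, m) := by
  simp only [IsInit, termLE_iff_termKey_le]

theorem IsInit.termKey_le {f : Fin d → MvPolynomial (Fin n) K} {t : Term K n d}
    (hf : IsInit V w mo f t) {m : MMon n d} (hm : coeffM f m ≠ 0) :
    termKey V w mo t ≤ termKey V w mo (coeffM f m, m) :=
  (isInit_iff_termKey_le.1 hf).2.2 m hm

theorem IsInit.ne_zero {f : Fin d → MvPolynomial (Fin n) K} {t : Term K n d}
    (hf : IsInit V w mo f t) : f ≠ 0 := by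
  rintro rfl
  exact hf.1 (hf.2.1.symm.trans (coeffM_zero t.2))

variable (V w mo) in
theorem exists_isInit {f : Fin d → MvPolynomial (Fin n) K} (hf : f ≠ 0) :
    ∃ t, IsInit V w mo f t := by
  have support_nonempty : {m | coeffM f m ≠ 0}.Nonempty := by
    by_contra! hempty
    refine hf (eq_of_coeffM_eq fun m => ?_)
    by_contra hm
    rw [coeffM_zero] at hm
    exact Set.notMem_empty m (hempty ▸ hm)
  obtain ⟨m, hm, hmin⟩ := Set.exists_min_image _ (fun m => termKey V w mo (coeffM f m, m))
    (finite_setOf_coeffM_ne_zero f) support_nonempty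
  exact ⟨(coeffM f m, m), isInit_iff_termKey_le.2 ⟨hm, rfl, hmin⟩⟩

theorem IsInit.unique {f : Fin d → MvPolynomial (Fin n) K} {t t' : Term K n d}
    (ht : IsInit V w mo f t) (ht' : IsInit V w mo f t') : t = t' := by
  have termKey_le_of_isInit {s s' : Term K n d} (hs : IsInit V w mo f s)
      (hs' : IsInit V w mo f s') : termKey V w mo s ≤ termKey V w mo s' := by
    simpa only [hs'.2.1] using hs.termKey_le (m := s'.2) (hs'.2.1 ▸ hs'.1)
  have hmon : t.2 = t'.2 := eq_of_termKey_eq <|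
    (termKey_le_of_isInit ht ht').antisymm (termKey_le_of_isInit ht' ht)
  exact Prod.ext (by rw [← ht.2.1, ← ht'.2.1, hmon]) hmon

theorem IsInit.monomial_smul {f : Fin d → MvPolynomial (Fin n) K} {t : Term K n d}
    (hf : IsInit V w mo f t) (u : Fin n →₀ ℕ) {a : K} (ha : a ≠ 0) :
    IsInit V w mo ((monomial u a : MvPolynomial (Fin n) K) • f) (mulTerm u a t) := by
  refine isInit_iff_termKey_le.2 ⟨mul_ne_zero ha hf.1, ?_, fun m hm => ?_⟩
  · rw [mulTerm, coeffM_monomial_smul_shiftMon, hf.2.1]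
  · obtain ⟨m, rfl⟩ := exists_eq_shiftMon_of_coeffM_monomial_smul_ne_zero hm
    rw [coeffM_monomial_smul_shiftMon] at hm ⊢
    exact termKey_mulTerm_le ha (hf.termKey_le (right_ne_zero_of_mul hm))

variable (V w mo) in
/-- The additive group of module elements all of whose terms lie strictly above `t` in the
term order. -/
def termsAbove (t : Term K n d) : AddSubgroup (Fin d → MvPolynomial (Fin n) K) where
  carrier := {f | ∀ m, coeffM f m ≠ 0 → termKey V w mo t < termKey V w mo (coeffM f m, m)}
  zero_mem' m hm := absurd (coeffM_zero m) hm
  neg_mem' {f} hf m hm := by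
    rw [coeffM_neg] at hm ⊢
    exact (hf m (neg_ne_zero.1 hm)).trans_le (termKey_le_of_valuation_le (V.map_neg _).ge m)
  add_mem' {f g} hf hg m hm := by
    rw [coeffM_add] at hm ⊢
    rcases termKey_le_termKey_add hm m with ⟨hfm, hle⟩ | ⟨hgm, hle⟩
    · exact (hf m hfm).trans_le hle
    · exact (hg m hgm).trans_le hle

theorem IsInit.mem_termsAbove_iff {f : Fin d → MvPolynomial (Fin n) K} {t t' : Term K n d}
    (hf : IsInit V w mo f t') :
    f ∈ termsAbove V w mo t ↔ termKey V w mo t < termKey V w mo t' := by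
  refine ⟨fun h => ?_, fun h m hm => h.trans_le (hf.termKey_le hm)⟩
  simpa only [hf.2.1] using h t'.2 (hf.2.1 ▸ hf.1)

theorem IsInit.sub_termEl_mem_termsAbove {f : Fin d → MvPolynomial (Fin n) K} {t : Term K n d}
    (hf : IsInit V w mo f t) : f - termEl t ∈ termsAbove V w mo t := by
  intro m hm
  rw [coeffM_sub, coeffM_termEl] at hm ⊢
  rcases eq_or_ne m t.2 with rfl | hne
  · simp [hf.2.1] at hm
  · rw [if_neg hne, sub_zero] at hm ⊢
    exact termKey_lt_of_le_of_ne (hf.termKey_le hm) hne.symm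

theorem IsInit.sub_mem_termsAbove {f g : Fin d → MvPolynomial (Fin n) K} {t : Term K n d}
    (hf : IsInit V w mo f t) (hg : IsInit V w mo g t) : f - g ∈ termsAbove V w mo t := by
  simpa using sub_mem hf.sub_termEl_mem_termsAbove hg.sub_termEl_mem_termsAbove

/- Adding higher terms can change the initial coefficient, but neither its valuation nor the
initial monomial. -/
theorem IsInit.exists_isInit_add {f r : Fin d → MvPolynomial (Fin n) K} {t : Term K n d}
    (hf : IsInit V w mo f t) (hr : r ∈ termsAbove V w mo t) :
    ∃ c, V c = V t.1 ∧ IsInit V w mo (f + r) (c, t.2) := by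
  have valuation_lt : V t.1 < V (coeffM r t.2) := by
    rcases eq_or_ne (coeffM r t.2) 0 with h0 | h0
    · simpa only [h0, AddValuation.map_zero] using (V.ne_top_iff.2 hf.1).lt_top
    · exact valuation_lt_of_termKey_lt (hr t.2 h0)
  have valuation_eq : V (coeffM (f + r) t.2) = V t.1 := by
    rw [coeffM_add, hf.2.1, V.map_add_eq_of_lt_left valuation_lt]
  refine ⟨_, valuation_eq, isInit_iff_termKey_le.2 ⟨?_, rfl, fun m hm => ?_⟩⟩
  · exact V.ne_top_iff.1 (valuation_eq ▸ V.ne_top_iff.2 hf.1)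
  refine (termKey_le_of_valuation_le valuation_eq.le t.2).trans ?_
  rw [coeffM_add] at hm ⊢
  rcases termKey_le_termKey_add hm m with ⟨hfm, hle⟩ | ⟨hrm, hle⟩
  · exact (hf.termKey_le hfm).trans hle
  · exact (hr m hrm).le.trans hle

theorem exists_isInit_sum {ι : Type*} {s : Finset ι} (hs : s.Nonempty)
    {F : ι → Fin d → MvPolynomial (Fin n) K} {t : ι → Term K n d}
    (hF : ∀ i ∈ s, IsInit V w mo (F i) (t i)) (ht : Set.InjOn (fun i => (t i).2) s) :
    ∃ i ∈ s, (∀ j ∈ s, termKey V w mo (t i) ≤ termKey V w mo (t j)) ∧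
      ∃ c, V c = V (t i).1 ∧ IsInit V w mo (∑ j ∈ s, F j) (c, (t i).2) := by
  classical
  obtain ⟨i, hi, hmin⟩ := s.exists_min_image (fun i => termKey V w mo (t i)) hs
  refine ⟨i, hi, hmin, ?_⟩
  rw [← Finset.add_sum_erase s F hi]
  refine (hF i hi).exists_isInit_add (sum_mem fun j hj => ?_)
  obtain ⟨hji, hj⟩ := Finset.mem_erase.1 hj
  exact (hF j hj).mem_termsAbove_iff.2
    (termKey_lt_of_le_of_ne (hmin j hj) fun hmon => hji (ht hj hi hmon.symm))

theorem IsInit.termKey_lt_mulTerm_of_smul_mem {f : Fin d → MvPolynomial (Fin n) K}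
    {t t' : Term K n d} (hf : IsInit V w mo f t') {h : MvPolynomial (Fin n) K}
    (hh : h • f ∈ termsAbove V w mo t) {u : Fin n →₀ ℕ} (hu : u ∈ h.support) :
    termKey V w mo t < termKey V w mo (mulTerm u (coeff u h) t') := by
  obtain ⟨v, -, hmin, c, hc, hinit⟩ := exists_isInit_sum ⟨u, hu⟩
    (fun v hv => hf.monomial_smul v (mem_support_iff.1 hv))
    (fun _ _ _ _ hab => shiftMon_left_injective t'.2 hab)
  rw [← smul_eq_sum_monomial_smul] at hinit
  exact (hinit.mem_termsAbove_iff.1 hh).trans_le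
    ((termKey_le_of_valuation_le hc.le _).trans (hmin u hu))

theorem exists_isInit_of_mem_span {ι : Type*} {E : ι → Fin d → MvPolynomial (Fin n) K}
    {t : ι → Term K n d} (hE : ∀ i, IsInit V w mo (E i) (t i))
    (ht : Function.Injective fun i => (t i).2) {x : Fin d → MvPolynomial (Fin n) K}
    (hx : x ∈ Submodule.span K (Set.range E)) (hx0 : x ≠ 0) :
    ∃ i c, IsInit V w mo x (c, (t i).2) := by
  obtain ⟨a, rfl⟩ := Finsupp.mem_span_range_iff_exists_finsupp.1 hx
  have support_nonempty : a.support.Nonempty := by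
    rw [Finsupp.support_nonempty_iff]
    rintro rfl
    exact hx0 Finsupp.sum_zero_index
  have isInit_smul (i : ι) (hi : i ∈ a.support) :
      IsInit V w mo (a i • E i) (mulTerm 0 (a i) (t i)) := by
    rw [← algebraMap_smul (MvPolynomial (Fin n) K)]
    exact (hE i).monomial_smul 0 (Finsupp.mem_support_iff.1 hi)
  obtain ⟨i, -, -, c, -, hinit⟩ := exists_isInit_sum support_nonempty isInit_smul
    fun i _ j _ hij => ht (shiftMon_injective 0 hij)
  rw [mulTerm, shiftMon_zero] at hinit
  exact ⟨i, c, hinit⟩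

theorem sForm_mem_termsAbove {f g : Fin d → MvPolynomial (Fin n) K} {tf tg : Term K n d}
    (hf : IsInit V w mo f tf) (hg : IsInit V w mo g tg) (h : tf.2.2 = tg.2.2) :
    sForm f g tf tg ∈ termsAbove V w mo (1, lcmMon tf.2 tg.2) := by
  have hf' := hf.monomial_smul (tf.2.1 ⊔ tg.2.1 - tf.2.1) (inv_ne_zero hf.1)
  have hg' := hg.monomial_smul (tg.2.1 ⊔ tf.2.1 - tg.2.1) (inv_ne_zero hg.1)
  rw [mulTerm, shiftMon_lcmMon, inv_mul_cancel₀ hf.1] at hf'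
  rw [mulTerm, shiftMon_lcmMon, inv_mul_cancel₀ hg.1, lcmMon_comm h.symm, sup_comm] at hg'
  exact hf'.sub_mem_termsAbove hg'

theorem exists_monomial_smul_sForm_eq (f g : Fin d → MvPolynomial (Fin n) K) {tf tg : Term K n d}
    (hf : tf.1 ≠ 0) {u v : Fin n →₀ ℕ} (h : shiftMon u tf.2 = shiftMon v tg.2) (c : K) :
    ∃ e, shiftMon e (lcmMon tf.2 tg.2) = shiftMon u tf.2 ∧
      (monomial e (c * tf.1) : MvPolynomial (Fin n) K) • sForm f g tf tg =
        (monomial u c : MvPolynomial (Fin n) K) • f -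
          (monomial v (c * tf.1 / tg.1) : MvPolynomial (Fin n) K) • g := by
  have hexp : u + tf.2.1 = v + tg.2.1 := congrArg Prod.fst h
  have lcm_le : tf.2.1 ⊔ tg.2.1 ≤ u + tf.2.1 := sup_le le_add_self (hexp ▸ le_add_self)
  obtain ⟨e, he⟩ := exists_add_of_le lcm_le
  have exp_left : e + (tf.2.1 ⊔ tg.2.1 - tf.2.1) = u :=
    add_right_cancel (b := tf.2.1) <| by
      rw [add_assoc, tsub_add_cancel_of_le le_sup_left, add_comm e, he]
  have exp_right : e + (tf.2.1 ⊔ tg.2.1 - tg.2.1) = v :=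
    add_right_cancel (b := tg.2.1) <| by
      rw [add_assoc, tsub_add_cancel_of_le le_sup_right, add_comm e, ← he, hexp]
  refine ⟨e, Prod.ext (by simp [shiftMon, lcmMon, he, add_comm e]) rfl, ?_⟩
  rw [sForm, smul_sub, smul_smul, smul_smul, monomial_mul, monomial_mul, exp_left, exp_right,
    mul_inv_cancel_right₀ hf, div_eq_mul_inv]

end InitialTerms

section Reduction

open scoped Topology

variable {K : Type*} [Field K] {n d : ℕ} {V : AddValuation K (WithTop ℝ)} {w : Fin n → ℝ}
  {mo : MonomialOrder (Fin n)} {ι : Type*} {g : ι → Fin d → MvPolynomial (Fin n) K}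
  {l : ι → Term K n d}

theorem exists_nat_lt_add_mul {ε : ℝ} (hε : 0 < ε) {B : WithTop ℝ} (hB : B ≠ ⊤)
    (x : WithTop ℝ) : ∃ N : ℕ, B < x + (N * ε : ℝ) := by
  lift B to ℝ using hB
  cases x with
  | top => exact ⟨0, by simp⟩
  | coe x =>
    obtain ⟨N, hN⟩ := exists_nat_gt ((B - x) / ε)
    exact ⟨N, mod_cast sub_lt_iff_lt_add'.1 ((div_lt_iff₀ hε).1 hN)⟩

variable (V w mo) in
/-- The term `t'` lies above `t` in one of the two ways that drive the reduction process: its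
weight is larger by at least `ε`, or its weight is no smaller and its monomial is smaller. -/
def AboveBy (ε : ℝ) (t t' : Term K n d) : Prop :=
  twt V w t + ε ≤ twt V w t' ∨ twt V w t ≤ twt V w t' ∧ monKey mo t'.2 < monKey mo t.2

theorem eventually_aboveBy {t t' : Term K n d} (h : termKey V w mo t < termKey V w mo t') :
    ∀ᶠ ε in 𝓝[>] (0 : ℝ), AboveBy V w mo ε t t' := by
  obtain hlt | ⟨heq, hmon⟩ := termKey_lt_iff.1 h
  · obtain ⟨x, hx⟩ := WithTop.ne_top_iff_exists.1 hlt.ne_top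
    rw [← hx] at hlt
    obtain ⟨y, hxy, hy⟩ : ∃ y : ℝ, x < y ∧ (y : WithTop ℝ) ≤ twt V w t' := by
      cases hz : twt V w t' with
      | top => exact ⟨x + 1, lt_add_one x, le_top⟩
      | coe y => exact ⟨y, WithTop.coe_lt_coe.1 (hz ▸ hlt), le_rfl⟩
    filter_upwards [Ioc_mem_nhdsGT (sub_pos.2 hxy)] with ε hε
    refine Or.inl (le_trans ?_ hy)
    rw [← hx]
    exact_mod_cast le_sub_iff_add_le'.1 hε.2
  · exact Filter.Eventually.of_forall fun _ => Or.inr ⟨heq.le, hmon⟩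

theorem AboveBy.mulTerm {ε : ℝ} {t t' : Term K n d} (h : AboveBy V w mo ε t t')
    (u : Fin n →₀ ℕ) (a : K) : AboveBy V w mo ε (mulTerm u a t) (mulTerm u a t') := by
  rw [AboveBy, twt_mulTerm, twt_mulTerm, add_assoc]
  exact h.imp (add_le_add_right · _)
    (And.imp (add_le_add_right · _) (monKey_shiftMon_lt_iff mo u).2)

variable (V w mo g l) in
/-- The group generated by the term multiples `c·x^u·g k` whose initial terms lie above `t`
by `ε`; here `l k` stands for the initial term of `g k`. -/
noncomputable def multiplesAbove (ε : ℝ) (t : Term K n d) :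
    AddSubgroup (Fin d → MvPolynomial (Fin n) K) :=
  AddSubgroup.closure {x | ∃ u c k, AboveBy V w mo ε t (mulTerm u c (l k)) ∧
    x = (monomial u c : MvPolynomial (Fin n) K) • g k}

theorem monomial_smul_mem_multiplesAbove {ε : ℝ} {t : Term K n d}
    {x : Fin d → MvPolynomial (Fin n) K} (hx : x ∈ multiplesAbove V w mo g l ε t)
    (u : Fin n →₀ ℕ) (a : K) :
    (monomial u a : MvPolynomial (Fin n) K) • x ∈
      multiplesAbove V w mo g l ε (mulTerm u a t) := by
  suffices hle : multiplesAbove V w mo g l ε t ≤ (multiplesAbove V w mo g l ε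
      (mulTerm u a t)).comap (DistribSMul.toAddMonoidHom _ (monomial u a)) from hle hx
  refine (AddSubgroup.closure_le _).2 ?_
  rintro _ ⟨v, c, k, hk, rfl⟩
  refine AddSubgroup.subset_closure ⟨u + v, a * c, k, ?_, ?_⟩
  · simpa only [mulTerm_mulTerm] using hk.mulTerm u a
  · rw [DistribSMul.toAddMonoidHom_apply, smul_smul, monomial_mul]

theorem eventually_smul_mem_multiplesAbove {k : ι} (hk : IsInit V w mo (g k) (l k))
    {h : MvPolynomial (Fin n) K} {t : Term K n d} (hh : h • g k ∈ termsAbove V w mo t) :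
    ∀ᶠ ε in 𝓝[>] (0 : ℝ), h • g k ∈ multiplesAbove V w mo g l ε t := by
  have eventually_above : ∀ᶠ ε in 𝓝[>] (0 : ℝ), ∀ u ∈ h.support,
      AboveBy V w mo ε t (mulTerm u (coeff u h) (l k)) :=
    (Filter.eventually_all_finset _).2 fun u hu =>
      eventually_aboveBy (hk.termKey_lt_mulTerm_of_smul_mem hh hu)
  filter_upwards [eventually_above] with ε hε
  rw [smul_eq_sum_monomial_smul]
  exact sum_mem fun u hu => AddSubgroup.subset_closure ⟨u, _, k, hε u hu, rfl⟩

variable (V w mo g l) in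
/-- The S-form of `g i` and `g j` has an LCM representation: it is a combination of the `g k`
whose summands have only terms above the least common multiple of the initial monomials, which
is a weaker condition than reducing to zero. -/
def HasLcmRepresentation [Fintype ι] (i j : ι) : Prop :=
  ∃ h : ι → MvPolynomial (Fin n) K, sForm (g i) (g j) (l i) (l j) = ∑ k, h k • g k ∧
    ∀ k, h k • g k ∈ termsAbove V w mo (1, lcmMon (l i).2 (l j).2)

variable (V w mo g l) in
/-- Every S-form lies in the span of multiples of the `g k` above, by the uniform gap `ε`, the
least common multiple of the two initial monomials. -/
def SFormGap (ε : ℝ) : Prop :=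
  ∀ i j, (l i).2.2 = (l j).2.2 → sForm (g i) (g j) (l i) (l j) ∈
    multiplesAbove V w mo g l ε (1, lcmMon (l i).2 (l j).2)

theorem exists_sFormGap [Fintype ι] (hl : ∀ i, IsInit V w mo (g i) (l i))
    (hS : ∀ i j, (l i).2.2 = (l j).2.2 → HasLcmRepresentation V w mo g l i j) :
    ∃ ε > 0, SFormGap V w mo g l ε := by
  have eventually_gap : ∀ᶠ ε in 𝓝[>] (0 : ℝ), SFormGap V w mo g l ε := by
    refine Filter.eventually_all.2 fun i => Filter.eventually_all.2 fun j => ?_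
    refine Filter.eventually_imp_distrib_left.2 fun hij => ?_
    obtain ⟨h, hsum, habove⟩ := hS i j hij
    filter_upwards [Filter.eventually_all.2 fun k =>
      eventually_smul_mem_multiplesAbove (hl k) (habove k)] with ε hε
    exact hsum ▸ sum_mem fun k _ => hε k
  exact (eventually_mem_nhdsWithin.and eventually_gap).exists

theorem SFormGap.monomial_smul_sub_mem {ε : ℝ} (hgap : SFormGap V w mo g l ε) {i j : ι}
    (hi : (l i).1 ≠ 0) {u v : Fin n →₀ ℕ} (h : shiftMon u (l i).2 = shiftMon v (l j).2) (c : K) :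
    (monomial u c : MvPolynomial (Fin n) K) • g i -
        (monomial v (c * (l i).1 / (l j).1) : MvPolynomial (Fin n) K) • g j ∈
      multiplesAbove V w mo g l ε (mulTerm u c (l i)) := by
  obtain ⟨e, hlcm, heq⟩ := exists_monomial_smul_sForm_eq (g i) (g j) hi h c
  have same_component : (l i).2.2 = (l j).2.2 := (Prod.ext_iff.1 h).2
  have hmem := monomial_smul_mem_multiplesAbove (hgap i j same_component) e (c * (l i).1)
  rwa [heq, mulTerm, hlcm, mul_one] at hmem

/- Each reduction step keeps the weight and lowers the monomial, which is well-founded, or raises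
the weight by `ε`, which takes it past `B` after finitely many steps. -/
theorem monomial_smul_mem_of_multiplesAbove {ε : ℝ} (hε : 0 < ε) {B : WithTop ℝ} (hB : B ≠ ⊤)
    {A : AddSubgroup (Fin d → MvPolynomial (Fin n) K)}
    (hA : ∀ u c k, B < twt V w (mulTerm u c (l k)) →
      (monomial u c : MvPolynomial (Fin n) K) • g k ∈ A)
    (hstep : ∀ u c k, multiplesAbove V w mo g l ε (mulTerm u c (l k)) ≤ A →
      (monomial u c : MvPolynomial (Fin n) K) • g k ∈ A)
    (u : Fin n →₀ ℕ) (c : K) (k : ι) : (monomial u c : MvPolynomial (Fin n) K) • g k ∈ A := by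
  have mem_of_lt (N : ℕ) : ∀ u c k, B < twt V w (mulTerm u c (l k)) + (N * ε : ℝ) →
      (monomial u c : MvPolynomial (Fin n) K) • g k ∈ A := by
    induction N with
    | zero => simpa using hA
    | succ N weight_ih =>
      intro u c k hlt
      induction hκ : monKey mo (shiftMon u (l k).2) using WellFoundedLT.induction
        generalizing u c k with
      | ind κ monomial_ih =>
      subst hκ
      refine hstep u c k ((AddSubgroup.closure_le _).2 ?_)
      rintro _ ⟨v, b, j, hweight | ⟨hweight, hmon⟩, rfl⟩
      · refine weight_ih v b j (hlt.trans_le ?_)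
        rw [Nat.cast_succ, add_one_mul, add_comm (_ * ε), WithTop.coe_add, ← add_assoc]
        exact add_le_add_left hweight _
      · exact monomial_ih _ hmon v b j (hlt.trans_le (add_le_add_left hweight _)) rfl
  obtain ⟨N, hN⟩ := exists_nat_lt_add_mul hε hB (twt V w (mulTerm u c (l k)))
  exact mem_of_lt N u c k hN

variable (l) in
/-- The monomial of the initial term of the multiple `x^u·g k`, indexed by `(u, k)`. -/
noncomputable def leadMon (p : (Fin n →₀ ℕ) × ι) : MMon n d := shiftMon p.1 (l p.2).2

variable (g l) in
/-- A choice of one multiple `x^u·g k` for each module monomial occurring as an initial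
monomial of such multiples. -/
noncomputable def standardMultiple (y : Set.range (leadMon l)) :
    Fin d → MvPolynomial (Fin n) K :=
  (monomial (Set.rangeSplitting (leadMon l) y).1 1 : MvPolynomial (Fin n) K) •
    g (Set.rangeSplitting (leadMon l) y).2

theorem isInit_standardMultiple (hl : ∀ i, IsInit V w mo (g i) (l i))
    (y : Set.range (leadMon l)) :
    IsInit V w mo (standardMultiple g l y) ((l (Set.rangeSplitting (leadMon l) y).2).1, y) := by
  set p := Set.rangeSplitting (leadMon l) y
  have lead_eq : shiftMon p.1 (l p.2).2 = y := Set.apply_rangeSplitting (leadMon l) y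
  have hinit := (hl p.2).monomial_smul p.1 one_ne_zero
  rwa [mulTerm, one_mul, lead_eq] at hinit

theorem monomial_smul_mem_span_sup_termsAbove {ε : ℝ} (hε : 0 < ε)
    (hl : ∀ i, IsInit V w mo (g i) (l i)) (hgap : SFormGap V w mo g l ε) {t : Term K n d}
    (ht : t.1 ≠ 0) (u : Fin n →₀ ℕ) (c : K) (k : ι) :
    (monomial u c : MvPolynomial (Fin n) K) • g k ∈
      (Submodule.span K (Set.range (standardMultiple g l))).toAddSubgroup ⊔
        termsAbove V w mo t := by
  refine monomial_smul_mem_of_multiplesAbove (V := V) (w := w) (mo := mo) (l := l) hε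
    (twt_ne_top V w ht)
    (fun u c k hlt => AddSubgroup.mem_sup_right ?_) (fun u c k hle => ?_) u c k
  · rcases eq_or_ne c 0 with rfl | hc
    · simp
    · exact ((hl k).monomial_smul u hc).mem_termsAbove_iff.2 (termKey_lt_iff.2 (Or.inl hlt))
  let y : Set.range (leadMon l) := ⟨leadMon l (u, k), Set.mem_range_self _⟩
  let p := Set.rangeSplitting (leadMon l) y
  have same_lead : shiftMon u (l k).2 = shiftMon p.1 (l p.2).2 :=
    (Set.apply_rangeSplitting (leadMon l) y).symm
  let b := c * (l k).1 / (l p.2).1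
  have standard_mem : (monomial p.1 b : MvPolynomial (Fin n) K) • g p.2 ∈
      Submodule.span K (Set.range (standardMultiple g l)) := by
    have heq : (monomial p.1 b : MvPolynomial (Fin n) K) • g p.2 = b • standardMultiple g l y := by
      rw [standardMultiple, ← smul_assoc, smul_monomial, smul_eq_mul, mul_one]
    exact heq ▸ Submodule.smul_mem _ b (Submodule.subset_span ⟨y, rfl⟩)
  rw [← sub_add_cancel (monomial u c • g k) (monomial p.1 b • g p.2)]
  exact add_mem (hle (hgap.monomial_smul_sub_mem (hl k).1 same_lead c))
    (AddSubgroup.mem_sup_left standard_mem)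

theorem span_le_span_sup_termsAbove {ε : ℝ} (hε : 0 < ε)
    (hl : ∀ i, IsInit V w mo (g i) (l i)) (hgap : SFormGap V w mo g l ε) {t : Term K n d}
    (ht : t.1 ≠ 0) : (Submodule.span (MvPolynomial (Fin n) K) (Set.range g)).toAddSubgroup ≤
      (Submodule.span K (Set.range (standardMultiple g l))).toAddSubgroup ⊔
        termsAbove V w mo t := by
  intro f hf
  obtain ⟨h, rfl⟩ := Finsupp.mem_span_range_iff_exists_finsupp.1 hf
  refine sum_mem fun k _ => ?_
  beta_reduce
  rw [smul_eq_sum_monomial_smul]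
  exact sum_mem fun u _ => monomial_smul_mem_span_sup_termsAbove hε hl hgap ht u _ k

theorem IsInit.exists_eq_shiftMon_of_hasLcmRepresentation [Fintype ι]
    (hl : ∀ i, IsInit V w mo (g i) (l i))
    (hS : ∀ i j, (l i).2.2 = (l j).2.2 → HasLcmRepresentation V w mo g l i j)
    {f : Fin d → MvPolynomial (Fin n) K}
    (hf : f ∈ Submodule.span (MvPolynomial (Fin n) K) (Set.range g)) {t : Term K n d}
    (ht : IsInit V w mo f t) : ∃ i u, t.2 = shiftMon u (l i).2 := by
  obtain ⟨ε, hε, hgap⟩ := exists_sFormGap hl hS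
  obtain ⟨x, hx, r, hr, rfl⟩ :=
    AddSubgroup.mem_sup.1 (span_le_span_sup_termsAbove hε hl hgap ht.1 hf)
  obtain ⟨c, -, hxt⟩ := ht.exists_isInit_add (neg_mem hr)
  rw [add_neg_cancel_right] at hxt
  obtain ⟨y, b, hxy⟩ := exists_isInit_of_mem_span (isInit_standardMultiple hl)
    Subtype.val_injective hx hxt.ne_zero
  obtain ⟨⟨u, i⟩, hui⟩ := y.2
  have same_monomial : t.2 = y := congrArg Prod.snd (hxt.unique hxy)
  exact ⟨i, u, same_monomial.trans hui.symm⟩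

theorem hasLcmRepresentation_of_reduces [Fintype ι] (hl : ∀ i, IsInit V w mo (g i) (l i))
    {i j : ι} (hij : (l i).2.2 = (l j).2.2)
    (hS : sForm (g i) (g j) (l i) (l j) ≠ 0 → ∃ h : ι → MvPolynomial (Fin n) K,
      sForm (g i) (g j) (l i) (l j) = ∑ k, h k • g k ∧
      ∀ k, h k • g k ≠ 0 → ∀ t t', IsInit V w mo (sForm (g i) (g j) (l i) (l j)) t →
        IsInit V w mo (h k • g k) t' → termLE V w mo t t') :
    HasLcmRepresentation V w mo g l i j := by
  rcases eq_or_ne (sForm (g i) (g j) (l i) (l j)) 0 with hzero | hne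
  · exact ⟨0, by simp [hzero], by simp⟩
  obtain ⟨h, hsum, hle⟩ := hS hne
  obtain ⟨t, ht⟩ := exists_isInit V w mo hne
  have lcm_lt := ht.mem_termsAbove_iff.1 (sForm_mem_termsAbove (hl i) (hl j) hij)
  refine ⟨h, hsum, fun k => ?_⟩
  rcases eq_or_ne (h k • g k) 0 with hk | hk
  · simp [hk]
  obtain ⟨t', ht'⟩ := exists_isInit V w mo hk
  exact ht'.mem_termsAbove_iff.2
    (lcm_lt.trans_le (termLE_iff_termKey_le.1 (hle k hk t t' ht ht')))

end Reduction

theorem termEl_mem_of_eq_shiftMon {K : Type*} [Field K] {n d : ℕ}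
    {M : Submodule (MvPolynomial (Fin n) K) (Fin d → MvPolynomial (Fin n) K)} {t t' : Term K n d}
    (ht' : termEl t' ∈ M) (h0 : t'.1 ≠ 0) {u : Fin n →₀ ℕ} (h : t.2 = shiftMon u t'.2) :
    termEl t ∈ M := by
  have heq : t = mulTerm u (t.1 / t'.1) t' := Prod.ext (div_mul_cancel₀ t.1 h0).symm h
  rw [heq, ← monomial_smul_termEl]
  exact M.smul_mem _ ht'

/-- **Buchberger criterion for modules over a field with valuation.**
If `S = {g₁,…,g_s}` consists of nonzero elements generating the submodule `I`, and every
defined nonzero S-form `S-form(gᵢ,gⱼ)` reduces to zero on division by `S` (that is, it can be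
written `Σ h_k g_k` with `in_{w,≺}(h_k g_k) ≥ in_{w,≺}(S-form(gᵢ,gⱼ))` whenever `h_k g_k ≠ 0`),
then `in_{w,≺}(I)` is generated by the initial terms `in_{w,≺}(gᵢ)`. -/
theorem buchberger_criterion {K : Type*} [Field K] {n d : ℕ}
    (V : ValOn K) (w : Fin n → ℝ) (mo : MonomialOrder (Fin n)) {s : ℕ}
    (g : Fin s → Fin d → MvPolynomial (Fin n) K) (hg : ∀ i, g i ≠ 0)
    (I : Submodule (MvPolynomial (Fin n) K) (Fin d → MvPolynomial (Fin n) K))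
    (hI : Submodule.span (MvPolynomial (Fin n) K) (Set.range g) = I)
    (hS : ∀ i j, ∀ ti tj : Term K n d,
      IsInit V.v w mo (g i) ti → IsInit V.v w mo (g j) tj →
      ti.2.2 = tj.2.2 →
      sForm (g i) (g j) ti tj ≠ 0 →
      ∃ h : Fin s → MvPolynomial (Fin n) K,
        sForm (g i) (g j) ti tj = ∑ k, h k • g k ∧
        ∀ k, h k • g k ≠ 0 → ∀ t t' : Term K n d,
          IsInit V.v w mo (sForm (g i) (g j) ti tj) t →
          IsInit V.v w mo (h k • g k) t' → termLE V.v w mo t t') :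
    inSub V.v w mo I =
      Submodule.span (MvPolynomial (Fin n) K)
        {x | ∃ i, ∃ t : Term K n d, IsInit V.v w mo (g i) t ∧ x = termEl t} := by
  choose l hl using fun i => exists_isInit V.toAddValuation w mo (hg i)
  have hlcm (i j : Fin s) (hij : (l i).2.2 = (l j).2.2) :
      HasLcmRepresentation V.toAddValuation w mo g l i j :=
    hasLcmRepresentation_of_reduces hl hij (hS i j (l i) (l j) (hl i) (hl j) hij)
  subst hI
  refine le_antisymm (Submodule.span_le.2 ?_) (Submodule.span_le.2 ?_)
  · rintro _ ⟨f, hf, -, t, ht, rfl⟩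
    obtain ⟨i, u, hmon⟩ := IsInit.exists_eq_shiftMon_of_hasLcmRepresentation hl hlcm hf ht
    exact termEl_mem_of_eq_shiftMon (Submodule.subset_span ⟨i, l i, hl i, rfl⟩) (hl i).1 hmon
  · rintro _ ⟨i, t, ht, rfl⟩
    exact Submodule.subset_span ⟨g i, Submodule.subset_span ⟨i, rfl⟩, hg i, t, ht, rfl⟩
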